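/- The normal closure K of (ab)² in the first Grigorchuk group absorbs pairs: for all g, h ∈ K, the permutation pair g h belongs to K (i.e. K × K, embedded via pair, is contained in K). -/

import Mathlib

/-!
Write `t = (ab)²`. Since `b = pair a c`, `ada⁻¹ = pair b 1` and `c² = 1`, the square of `b · ada⁻¹`
is `pair t 1`. On the other hand `d = bc` gives `b · ada⁻¹ = t⁻¹u` with `u = aca⁻¹` an involution,
so `pair t 1 = t⁻¹ · ut⁻¹u⁻¹` lies in `K`. Every element of `Γ` is the first coordinate of some pair
in `Γ`, because `a, b, c, d` are the first coordinates of `b, ada⁻¹, aba⁻¹, aca⁻¹`; conjugating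
`pair t 1` by such pairs puts `pair g 1` in `K` for all `g ∈ K`. Conjugation by `a` swaps the two
coordinates, so `K` also contains `pair 1 h` for `h ∈ K`, and `pair g h = pair g 1 * pair 1 h`.
-/

namespace Grigorchuk

/-- Underlying map of the Grigorchuk generator `a`: flip the first letter. -/
def aF : List Bool → List Bool
  | [] => []
  | x :: w => (!x) :: w

mutual
  /-- Underlying map of the Grigorchuk generator `b`. -/
  def bF : List Bool → List Bool
    | [] => []
    | false :: w => false :: aF w
    | true :: w => true :: cF w
  /-- Underlying map of the Grigorchuk generator `c`. -/
  def cF : List Bool → List Bool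
    | [] => []
    | false :: w => false :: aF w
    | true :: w => true :: dF w
  /-- Underlying map of the Grigorchuk generator `d`. -/
  def dF : List Bool → List Bool
    | [] => []
    | false :: w => false :: w
    | true :: w => true :: bF w
end

theorem aF_aF : ∀ w : List Bool, aF (aF w) = w := by
  intro w
  cases w with
  | nil => rfl
  | cons x w => simp [aF]

theorem bcd_invol : ∀ w : List Bool,
    bF (bF w) = w ∧ cF (cF w) = w ∧ dF (dF w) = w := by
  intro w
  induction w with
  | nil => simp [bF, cF, dF]
  | cons x w ih =>
    cases x <;> simp [bF, cF, dF, aF_aF, ih.1, ih.2.1, ih.2.2]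

/-- The Grigorchuk generator `a` as a permutation of `List Bool`. -/
def a : Equiv.Perm (List Bool) := ⟨aF, aF, aF_aF, aF_aF⟩

/-- The Grigorchuk generator `b` as a permutation of `List Bool`. -/
def b : Equiv.Perm (List Bool) :=
  ⟨bF, bF, fun w => (bcd_invol w).1, fun w => (bcd_invol w).1⟩

/-- The Grigorchuk generator `c` as a permutation of `List Bool`. -/
def c : Equiv.Perm (List Bool) :=
  ⟨cF, cF, fun w => (bcd_invol w).2.1, fun w => (bcd_invol w).2.1⟩

/-- The Grigorchuk generator `d` as a permutation of `List Bool`. -/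
def d : Equiv.Perm (List Bool) :=
  ⟨dF, dF, fun w => (bcd_invol w).2.2, fun w => (bcd_invol w).2.2⟩

/-- Underlying map of the pair `(g, h)` acting on the two subtrees. -/
def pairF (g h : List Bool → List Bool) : List Bool → List Bool
  | [] => []
  | false :: w => false :: g w
  | true :: w => true :: h w

/-- The permutation of `List Bool` acting as `g` on the subtree below `false`
and as `h` on the subtree below `true`, fixing the root. -/
def pair (g h : Equiv.Perm (List Bool)) : Equiv.Perm (List Bool) :=
  ⟨pairF g h, pairF g.symm h.symm,
    fun w => by cases w with
      | nil => rfl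
      | cons x w => cases x <;> simp [pairF],
    fun w => by cases w with
      | nil => rfl
      | cons x w => cases x <;> simp [pairF]⟩

/-- The first Grigorchuk group: the subgroup of `Equiv.Perm (List Bool)`
generated by `a`, `b`, `c`, `d`. -/
def Γ : Subgroup (Equiv.Perm (List Bool)) := Subgroup.closure {a, b, c, d}

/-- The normal closure in `Γ` of the element `(a * b)^2`, realized as the subgroup
of `Equiv.Perm (List Bool)` generated by all `Γ`-conjugates of `(a * b)^2`. -/
def K : Subgroup (Equiv.Perm (List Bool)) :=
  Subgroup.closure {g | ∃ x ∈ Γ, g = x * (a * b) ^ 2 * x⁻¹}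

end Grigorchuk

namespace Grigorchuk

open Equiv Subgroup

theorem le_normalizer_closure_conj {G : Type*} [Group G] (H : Subgroup G) (t : G) :
    H ≤ normalizer (closure {g | ∃ x ∈ H, g = x * t * x⁻¹}) := by
  refine le_normalizer_closure_iff.mpr ?_
  rintro x hx _ ⟨y, hy, rfl⟩
  exact subset_closure ⟨x * y, H.mul_mem hx hy, by group⟩

theorem pair_mul_pair (g h g' h' : Perm (List Bool)) :
    pair g h * pair g' h' = pair (g * g') (h * h') := by
  ext1 w
  rcases w with _ | ⟨_ | _, w⟩ <;> rfl

theorem pair_one_one : pair 1 1 = 1 := by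
  ext1 w
  rcases w with _ | ⟨_ | _, w⟩ <;> rfl

/-- The embedding of the direct square of `Perm (List Bool)` as the permutations that fix the root
and preserve both subtrees below it. Being a homomorphism, it pulls a subgroup `H` back to the
subgroup of those `(g, h)` with `pair g h ∈ H`. -/
def pairHom : Perm (List Bool) × Perm (List Bool) →* Perm (List Bool) where
  toFun p := pair p.1 p.2
  map_one' := pair_one_one
  map_mul' p q := (pair_mul_pair p.1 p.2 q.1 q.2).symm

theorem inv_pair (g h : Perm (List Bool)) : (pair g h)⁻¹ = pair g⁻¹ h⁻¹ :=
  (map_inv pairHom (g, h)).symm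

theorem a_inv : a⁻¹ = a := rfl

theorem b_inv : b⁻¹ = b := rfl

theorem c_inv : c⁻¹ = c := rfl

/- On the subtree below `true`, each of these relations becomes the next one, cyclically. -/
theorem bcd_comp (w : List Bool) :
    bF (cF w) = dF w ∧ cF (dF w) = bF w ∧ dF (bF w) = cF w := by
  induction w with
  | nil => simp [bF, cF, dF]
  | cons x w ih => cases x <;> simp [bF, cF, dF, aF_aF, ih]

theorem b_mul_c : b * c = d := Equiv.ext fun w => (bcd_comp w).1

theorem a_conj_pair (g h : Perm (List Bool)) : a * pair g h * a⁻¹ = pair h g := by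
  ext1 w
  rcases w with _ | ⟨_ | _, w⟩ <;> rfl

theorem pair_a_c : pair a c = b := by
  ext1 w
  rcases w with _ | ⟨_ | _, w⟩ <;> simp [a, b, c, pair, pairF, bF]

theorem pair_a_d : pair a d = c := by
  ext1 w
  rcases w with _ | ⟨_ | _, w⟩ <;> simp [a, c, d, pair, pairF, cF]

theorem pair_one_b : pair 1 b = d := by
  ext1 w
  rcases w with _ | ⟨_ | _, w⟩ <;> simp [b, d, pair, pairF, dF]

theorem pair_c_a : pair c a = a * b * a⁻¹ := by
  rw [← a_conj_pair, pair_a_c]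

theorem pair_d_a : pair d a = a * c * a⁻¹ := by
  rw [← a_conj_pair, pair_a_d]

theorem pair_b_one : pair b 1 = a * d * a⁻¹ := by
  rw [← a_conj_pair, pair_one_b]

theorem pair_sq_one_eq_sq : pair ((a * b) ^ 2) 1 = (b * (a * d * a⁻¹)) ^ 2 := by
  have hc : c ^ 2 = 1 := by rw [pow_two, mul_eq_one_iff_eq_inv, c_inv]
  calc pair ((a * b) ^ 2) 1 = pair (a * b) c ^ 2 := by
        rw [pow_two (pair _ _), pair_mul_pair, ← pow_two, ← pow_two, hc]
    _ = (pair a c * pair b 1) ^ 2 := by rw [pair_mul_pair, mul_one]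
    _ = (b * (a * d * a⁻¹)) ^ 2 := by rw [pair_a_c, pair_b_one]

theorem b_mul_conj_d : b * (a * d * a⁻¹) = ((a * b) ^ 2)⁻¹ * (a * c * a⁻¹) :=
  calc b * (a * d * a⁻¹) = b⁻¹ * (a⁻¹ * (b⁻¹ * c) * a⁻¹) := by rw [a_inv, b_inv, b_mul_c]
    _ = ((a * b) ^ 2)⁻¹ * (a * c * a⁻¹) := by
        rw [pow_two]
        group

theorem pair_sq_one_eq_inv_mul_conj :
    pair ((a * b) ^ 2) 1 =
      ((a * b) ^ 2)⁻¹ * ((a * c * a⁻¹) * ((a * b) ^ 2)⁻¹ * (a * c * a⁻¹)⁻¹) := by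
  have hinv : (a * c * a⁻¹)⁻¹ = a * c * a⁻¹ := by rw [conj_inv, c_inv]
  rw [pair_sq_one_eq_sq, b_mul_conj_d, hinv]
  simp only [pow_two, mul_assoc]

theorem a_mem_Γ : a ∈ Γ := subset_closure (by simp)

theorem b_mem_Γ : b ∈ Γ := subset_closure (by simp)

theorem c_mem_Γ : c ∈ Γ := subset_closure (by simp)

theorem d_mem_Γ : d ∈ Γ := subset_closure (by simp)

theorem a_conj_mem_Γ {g : Perm (List Bool)} (hg : g ∈ Γ) : a * g * a⁻¹ ∈ Γ :=
  Γ.mul_mem (Γ.mul_mem a_mem_Γ hg) (Γ.inv_mem a_mem_Γ)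

theorem exists_pair_mem_Γ {g : Perm (List Bool)} (hg : g ∈ Γ) : ∃ h, pair g h ∈ Γ := by
  have hgen : ∀ s ∈ ({a, b, c, d} : Set (Perm (List Bool))), ∃ h, pair s h ∈ Γ := by
    rintro _ (rfl | rfl | rfl | rfl)
    · exact ⟨c, pair_a_c ▸ b_mem_Γ⟩
    · exact ⟨1, pair_b_one ▸ a_conj_mem_Γ d_mem_Γ⟩
    · exact ⟨a, pair_c_a ▸ a_conj_mem_Γ b_mem_Γ⟩
    · exact ⟨a, pair_d_a ▸ a_conj_mem_Γ c_mem_Γ⟩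
  have hle : Γ ≤ (Γ.comap pairHom).map (MonoidHom.fst _ _) :=
    (closure_le _).mpr fun s hs =>
      let ⟨h, hh⟩ := hgen s hs
      ⟨(s, h), hh, rfl⟩
  obtain ⟨⟨_, h⟩, hh, rfl⟩ := hle hg
  exact ⟨h, hh⟩

theorem conj_mem_K {x g : Perm (List Bool)} (hx : x ∈ Γ) (hg : g ∈ K) : x * g * x⁻¹ ∈ K :=
  le_normalizer_iff.mp (le_normalizer_closure_conj Γ _) x hx g hg

theorem sq_mem_K : (a * b) ^ 2 ∈ K := subset_closure ⟨1, Γ.one_mem, by group⟩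

theorem pair_sq_one_mem_K : pair ((a * b) ^ 2) 1 ∈ K := by
  have hinv : ((a * b) ^ 2)⁻¹ ∈ K := K.inv_mem sq_mem_K
  rw [pair_sq_one_eq_inv_mul_conj]
  exact K.mul_mem hinv (conj_mem_K (a_conj_mem_Γ c_mem_Γ) hinv)

theorem pair_one_right_mem_K {g : Perm (List Bool)} (hg : g ∈ K) : pair g 1 ∈ K := by
  have hgen : ∀ x ∈ Γ, pair (x * (a * b) ^ 2 * x⁻¹) 1 ∈ K := by
    intro x hx
    obtain ⟨y, hxy⟩ := exists_pair_mem_Γ hx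
    have hconj : pair x y * pair ((a * b) ^ 2) 1 * (pair x y)⁻¹ =
        pair (x * (a * b) ^ 2 * x⁻¹) 1 := by
      rw [inv_pair, pair_mul_pair, pair_mul_pair, mul_one, mul_inv_cancel]
    exact hconj ▸ conj_mem_K hxy pair_sq_one_mem_K
  have hle : K ≤ K.comap (pairHom.comp (MonoidHom.inl _ _)) := by
    refine (closure_le _).mpr ?_
    rintro _ ⟨x, hx, rfl⟩
    exact hgen x hx
  exact hle hg

theorem pair_one_left_mem_K {h : Perm (List Bool)} (hh : h ∈ K) : pair 1 h ∈ K :=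
  a_conj_pair h 1 ▸ conj_mem_K a_mem_Γ (pair_one_right_mem_K hh)

end Grigorchuk

open Grigorchuk in
/-- The normal closure `K` of `(ab)²` in the first Grigorchuk group absorbs pairs:
if `g, h ∈ K` then `pair g h ∈ K`. -/
theorem grigorchuk_K_pair (g h : Equiv.Perm (List Bool))
    (hg : g ∈ K) (hh : h ∈ K) :
    pair g h ∈ K := by
  have hgh : pair g 1 * pair 1 h = pair g h := by rw [pair_mul_pair, mul_one, one_mul]
  exact hgh ▸ K.mul_mem (pair_one_right_mem_K hg) (pair_one_left_mem_K hh)
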